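/- arXiv:1708.04002 — 2 statements merged into one kernel-verified Lean document; each statement's English description precedes it below -/
import Mathlib

section
/- Let π(x,y) = (2y(y−x+2)/(x−y)², y²/(x−y)²) for x ≠ y, considered over the finite field 𝔽_p = ZMod p for a prime p. There exists N such that for every prime p ≥ N the following are equivalent: (1) there exists (x,y) ∈ 𝔽_p² such that the points z₀ = (x,y), z₁ = π(z₀), z₂ = π(z₁) each have distinct coordinates, π(z₂) = z₀, and π(z₀) ≠ z₀ (i.e., π has a point of period exactly 3 over 𝔽_p); (2) p mod 13 ∈ {1, 5, 8, 12}, or p mod 7 ∈ {1, 6}. -/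
/-- The Pappus–Steiner map `π(x,y) = (2y(y−x+2)/(x−y)², y²/(x−y)²)`. -/
def pap {k : Type*} [Field k] (z : k × k) : k × k :=
  (2 * z.2 * (z.2 - z.1 + 2) / (z.1 - z.2) ^ 2, z.2 ^ 2 / (z.1 - z.2) ^ 2)

/-!
In the coordinate `s = 4 (x - y) / y` the map becomes the recurrence `sₙ₊₂ = sₙ² - 2 sₙ₊₁ - 4`.
Eliminating two of the three slopes of a cycle leaves the fixed slopes `4`, `-1` and the roots of
`s ^ 3 + s ^ 2 - 4 s + 1` and `s ^ 3 + 2 s ^ 2 - s - 1`. The first cubic, and the second one after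
the substitution `s ↦ -1 - s`, are the minimal polynomials over `ℚ` of the cubic Gaussian periods
of conductors `13` and `7`. The `q`-power Frobenius multiplies the index of a period by `q`, so
for `q` prime to the conductor these cubics have a root in `𝔽_q` if and only if `q ^ 4 = 1` modulo
`13`, respectively `q ^ 2 = 1` modulo `7`.
-/

open Polynomial

section SlopeCycle

/-- `(a, b, c)` is a cycle of length three of the recurrence `sₙ₊₂ = sₙ² - 2 sₙ₊₁ - 4`. -/
def IsSlopeCycle {R : Type*} [CommRing R] (a b c : R) : Prop :=
  c = a ^ 2 - 2 * b - 4 ∧ a = b ^ 2 - 2 * c - 4 ∧ b = c ^ 2 - 2 * a - 4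

namespace IsSlopeCycle

variable {R : Type*} [CommRing R] {a b c : R}

theorem rotate (h : IsSlopeCycle a b c) : IsSlopeCycle b c a :=
  ⟨h.2.1, h.2.2, h.1⟩

theorem mul_one_add_four_mul_sq (h : IsSlopeCycle a b c) :
    a * (1 + 4 * c ^ 2) = c ^ 4 + 2 * c - 4 := by
  obtain ⟨hc, ha, rfl⟩ := h
  linear_combination ha - 4 * hc

theorem cubic_mul_cubic_eq_zero (h : IsSlopeCycle a b c) :
    (c - 4) * (c + 1) * (c ^ 3 + c ^ 2 - 4 * c + 1) * (c ^ 3 + 2 * c ^ 2 - c - 1) = 0 := by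
  have hl := h.mul_one_add_four_mul_sq
  obtain ⟨hc, -, rfl⟩ := h
  linear_combination -(1 + 4 * c ^ 2) ^ 2 * hc -
    (a * (1 + 4 * c ^ 2) + c ^ 4 + 2 * c - 4 + 4 * (1 + 4 * c ^ 2)) * hl

variable [IsDomain R]

theorem eq_or_cubic_eq_zero (h : IsSlopeCycle a b c) :
    (a = b ∧ b = c) ∨ c ^ 3 + c ^ 2 - 4 * c + 1 = 0 ∨ c ^ 3 + 2 * c ^ 2 - c - 1 = 0 := by
  rcases mul_eq_zero.1 h.cubic_mul_cubic_eq_zero with hprod | hseven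
  · rcases mul_eq_zero.1 hprod with hfixed | hthirteen
    · by_cases hdeg : 1 + 4 * c ^ 2 = 0
      · exact .inr (.inl (by linear_combination hdeg + c * hfixed))
      · have hac : a = c := mul_right_cancel₀ hdeg (by
          linear_combination h.mul_one_add_four_mul_sq + (c ^ 2 - c + 1) * hfixed)
        have hbc : b = c := by linear_combination h.2.2 - 2 * hac + hfixed
        exact .inl ⟨hac.trans hbc.symm, hbc⟩
    · exact .inr (.inl hthirteen)
  · exact .inr (.inr hseven)

theorem ne_zero (h : IsSlopeCycle a b c) (hne : ¬(a = b ∧ b = c)) : c ≠ 0 := by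
  rintro rfl
  simpa [hne] using h.eq_or_cubic_eq_zero

theorem eq_of_seven_eq_zero (h7 : (7 : R) = 0) (h : IsSlopeCycle a b c)
    (hc : c ^ 3 + 2 * c ^ 2 - c - 1 = 0) : a = b ∧ b = c := by
  have hc4 : c = 4 := by
    refine sub_eq_zero.1 ((pow_eq_zero_iff three_ne_zero).1 ?_)
    linear_combination hc + (-2 * c ^ 2 + 7 * c - 9) * h7
  subst hc4
  have ha : a = 4 := by
    linear_combination 4 * h.mul_one_add_four_mul_sq + (148 - 37 * a) * h7
  have hb : b = 4 := by linear_combination h.2.2 - 2 * ha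
  exact ⟨ha.trans hb.symm, hb⟩

end IsSlopeCycle

variable {R : Type*} [CommRing R]

theorem exists_isSlopeCycle_of_cubic_thirteen (h13 : (13 : R) ≠ 0) {t : R}
    (ht : t ^ 3 + t ^ 2 - 4 * t + 1 = 0) :
    ∃ a b c : R, IsSlopeCycle a b c ∧ ¬(a = b ∧ b = c) := by
  -- The three roots of the cubic, expressed in one of them.
  refine ⟨t ^ 2 + t - 3, 2 - 2 * t - t ^ 2, t, ⟨by grind, by grind, by ring⟩, ?_⟩
  rintro ⟨-, hbc⟩
  exact h13 (by linear_combination -(4 * t + 15) * ht - (4 * t ^ 2 + 7 * t - 14) * hbc)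

theorem exists_isSlopeCycle_of_cubic_seven (h7 : (7 : R) ≠ 0) {t : R}
    (ht : t ^ 3 + t ^ 2 - 2 * t - 1 = 0) :
    ∃ a b c : R, IsSlopeCycle a b c ∧ ¬(a = b ∧ b = c) := by
  -- The values `-1 - r` at the three roots `r` of the cubic.
  refine ⟨-1 - t, t ^ 2 + t - 2, 1 - t ^ 2, ⟨by grind, by grind, by grind⟩, ?_⟩
  rintro ⟨hab, -⟩
  exact h7 (by linear_combination -(t + 4) * ht - (t ^ 2 + 3 * t - 3) * hab)

theorem exists_isSlopeCycle_iff_exists_cubic [IsDomain R] :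
    (∃ a b c : R, IsSlopeCycle a b c ∧ ¬(a = b ∧ b = c)) ↔
      ((13 : R) ≠ 0 ∧ ∃ t : R, t ^ 3 + t ^ 2 - 4 * t + 1 = 0) ∨
        ((7 : R) ≠ 0 ∧ ∃ t : R, t ^ 3 + t ^ 2 - 2 * t - 1 = 0) := by
  constructor
  · rintro ⟨a, b, c, h, hne⟩
    rcases h.eq_or_cubic_eq_zero with heq | hc | hc
    · exact absurd heq hne
    · -- In characteristic `13` the first cubic is `(t - 4) ^ 3`, but the second has the root `-3`.
      by_cases h13 : (13 : R) = 0
      · have h7 : (7 : R) ≠ 0 := fun h7 => one_ne_zero (α := R) (by linear_combination 2 * h7 - h13)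
        exact .inr ⟨h7, -3, by linear_combination -h13⟩
      · exact .inl ⟨h13, c, hc⟩
    · exact .inr ⟨fun h7 => hne (h.eq_of_seven_eq_zero h7 hc), -1 - c, by linear_combination -hc⟩
  · rintro (⟨h13, t, ht⟩ | ⟨h7, t, ht⟩)
    · exact exists_isSlopeCycle_of_cubic_thirteen h13 ht
    · exact exists_isSlopeCycle_of_cubic_seven h7 ht

end SlopeCycle

section NumeralNeZero

variable {R : Type*} [Semiring R] [NoZeroDivisors R]

theorem four_ne_zero_of_two_ne_zero (h2 : (2 : R) ≠ 0) : (4 : R) ≠ 0 := by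
  rw [show (4 : R) = 2 ^ 2 by norm_num]
  exact pow_ne_zero 2 h2

theorem sixteen_ne_zero_of_two_ne_zero (h2 : (2 : R) ≠ 0) : (16 : R) ≠ 0 := by
  rw [show (16 : R) = 2 ^ 4 by norm_num]
  exact pow_ne_zero 4 h2

end NumeralNeZero

section PapSlope

variable {k : Type*} [Field k]

/-- `z` has exact period `3` under `pap`; the three inequalities of coordinates say that the
iterates are defined. -/
def IsExactPeriodThree (z : k × k) : Prop :=
  z.1 ≠ z.2 ∧ (pap z).1 ≠ (pap z).2 ∧ (pap (pap z)).1 ≠ (pap (pap z)).2 ∧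
    pap (pap (pap z)) = z ∧ pap z ≠ z

/-- The coordinate `4 (x - y) / y`, in which `pap` becomes the second-order recurrence
`sₙ₊₂ = sₙ² - 2 sₙ₊₁ - 4`; the factor `4` makes the coefficients integral. -/
def papSlope (z : k × k) : k :=
  4 * (z.1 - z.2) / z.2

/-- The point of slope `t` that is the image under `pap` of a point of slope `s`. -/
def pointOfSlopes (s t : k) : k × k :=
  ((16 + 4 * t) / s ^ 2, 16 / s ^ 2)

theorem snd_ne_zero_of_pap_fst_ne_snd {z : k × k} (h : (pap z).1 ≠ (pap z).2) : z.2 ≠ 0 := by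
  intro hy
  simp [pap, hy] at h

theorem pap_snd_ne_zero {z : k × k} (hz : z.1 ≠ z.2) (hy : z.2 ≠ 0) : (pap z).2 ≠ 0 :=
  div_ne_zero (pow_ne_zero 2 hy) (pow_ne_zero 2 (sub_ne_zero.2 hz))

theorem pap_snd_eq_div_papSlope_sq (h2 : (2 : k) ≠ 0) {z : k × k} (hz : z.1 ≠ z.2) :
    (pap z).2 = 16 / papSlope z ^ 2 := by
  have h4 := four_ne_zero_of_two_ne_zero h2
  have hd : z.1 - z.2 ≠ 0 := sub_ne_zero.2 hz
  simp only [pap, papSlope]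
  field_simp
  norm_num

theorem papSlope_pap {z : k × k} (hz : z.1 ≠ z.2) (hy : z.2 ≠ 0) :
    papSlope (pap z) = 16 / z.2 - 2 * papSlope z - 4 := by
  have hd : z.1 - z.2 ≠ 0 := sub_ne_zero.2 hz
  simp only [pap, papSlope]
  field_simp
  ring

theorem papSlope_pap_pap (h2 : (2 : k) ≠ 0) {z : k × k} (hz : z.1 ≠ z.2)
    (hz' : (pap z).1 ≠ (pap z).2) :
    papSlope (pap (pap z)) = papSlope z ^ 2 - 2 * papSlope (pap z) - 4 := by
  have hy' := pap_snd_ne_zero hz (snd_ne_zero_of_pap_fst_ne_snd hz')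
  rw [papSlope_pap hz' hy', pap_snd_eq_div_papSlope_sq h2 hz,
    div_div_cancel₀ (sixteen_ne_zero_of_two_ne_zero h2)]

theorem pap_eq_pointOfSlopes (h2 : (2 : k) ≠ 0) {z : k × k} (hz : z.1 ≠ z.2) (hy : z.2 ≠ 0) :
    pap z = pointOfSlopes (papSlope z) (papSlope (pap z)) := by
  have fst_eq {w : k × k} (hw : w.2 ≠ 0) : w.1 = w.2 * (16 + 4 * papSlope w) / 16 := by
    have h16 := sixteen_ne_zero_of_two_ne_zero h2
    simp only [papSlope]
    field_simp
    ring
  ext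
  · rw [fst_eq (pap_snd_ne_zero hz hy), pap_snd_eq_div_papSlope_sq h2 hz, pointOfSlopes]
    have h16 := sixteen_ne_zero_of_two_ne_zero h2
    field_simp
  · exact pap_snd_eq_div_papSlope_sq h2 hz

theorem pointOfSlopes_fst_ne_snd (h2 : (2 : k) ≠ 0) {s t : k} (hs : s ≠ 0) (ht : t ≠ 0) :
    (pointOfSlopes s t).1 ≠ (pointOfSlopes s t).2 := by
  rw [pointOfSlopes, Ne, div_left_inj' (pow_ne_zero 2 hs), add_eq_left]
  exact mul_ne_zero (four_ne_zero_of_two_ne_zero h2) ht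

theorem papSlope_pointOfSlopes (h2 : (2 : k) ≠ 0) {s : k} (hs : s ≠ 0) (t : k) :
    papSlope (pointOfSlopes s t) = t := by
  have h16 := sixteen_ne_zero_of_two_ne_zero h2
  simp only [papSlope, pointOfSlopes]
  field_simp
  ring

theorem pap_pointOfSlopes (h2 : (2 : k) ≠ 0) {s t : k} (hs : s ≠ 0) (ht : t ≠ 0) :
    pap (pointOfSlopes s t) = pointOfSlopes t (s ^ 2 - 2 * t - 4) := by
  have hxy := pointOfSlopes_fst_ne_snd h2 hs ht
  have hy : (pointOfSlopes s t).2 ≠ 0 :=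
    div_ne_zero (sixteen_ne_zero_of_two_ne_zero h2) (pow_ne_zero 2 hs)
  have snd_eq : (pointOfSlopes s t).2 = 16 / s ^ 2 := rfl
  rw [pap_eq_pointOfSlopes h2 hxy hy, papSlope_pap hxy hy, papSlope_pointOfSlopes h2 hs, snd_eq,
    div_div_cancel₀ (sixteen_ne_zero_of_two_ne_zero h2)]

theorem exists_isSlopeCycle_of_isExactPeriodThree (h2 : (2 : k) ≠ 0) {z : k × k}
    (hz : IsExactPeriodThree z) : ∃ a b c : k, IsSlopeCycle a b c ∧ ¬(a = b ∧ b = c) := by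
  obtain ⟨h₀, h₁, h₂, hper, hne⟩ := hz
  refine ⟨papSlope z, papSlope (pap z), papSlope (pap (pap z)),
    ⟨papSlope_pap_pap h2 h₀ h₁, ?_, ?_⟩, fun ⟨h₀₁, h₁₂⟩ => hne ?_⟩
  · simpa only [hper] using papSlope_pap_pap h2 h₁ h₂
  · simpa only [hper] using papSlope_pap_pap h2 h₂ (hper.symm ▸ h₀)
  · have hy₀ := snd_ne_zero_of_pap_fst_ne_snd h₁
    have hy₂ := snd_ne_zero_of_pap_fst_ne_snd (hper.symm ▸ h₀)
    calc
      pap z = pointOfSlopes (papSlope z) (papSlope (pap z)) := pap_eq_pointOfSlopes h2 h₀ hy₀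
      _ = pointOfSlopes (papSlope (pap (pap z))) (papSlope z) := by rw [← h₁₂, ← h₀₁]
      _ = z := by simpa only [hper] using (pap_eq_pointOfSlopes h2 h₂ hy₂).symm

theorem IsSlopeCycle.isExactPeriodThree (h2 : (2 : k) ≠ 0) {a b c : k} (h : IsSlopeCycle a b c)
    (hne : ¬(a = b ∧ b = c)) : IsExactPeriodThree (pointOfSlopes c a) := by
  have hc : c ≠ 0 := h.ne_zero hne
  have ha : a ≠ 0 := h.rotate.ne_zero (by grind)
  have hb : b ≠ 0 := h.rotate.rotate.ne_zero (by grind)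
  have pap_ca : pap (pointOfSlopes c a) = pointOfSlopes a b := by
    rw [pap_pointOfSlopes h2 hc ha, ← h.2.2]
  have pap_ab : pap (pointOfSlopes a b) = pointOfSlopes b c := by
    rw [pap_pointOfSlopes h2 ha hb, ← h.1]
  have pap_bc : pap (pointOfSlopes b c) = pointOfSlopes c a := by
    rw [pap_pointOfSlopes h2 hb hc, ← h.2.1]
  unfold IsExactPeriodThree
  rw [pap_ca, pap_ab]
  refine ⟨pointOfSlopes_fst_ne_snd h2 hc ha, pointOfSlopes_fst_ne_snd h2 ha hb,
    pointOfSlopes_fst_ne_snd h2 hb hc, pap_bc, fun hfix => hne ?_⟩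
  have hba : b = a := by
    simpa only [papSlope_pointOfSlopes h2 ha, papSlope_pointOfSlopes h2 hc] using
      congrArg papSlope hfix
  have hcb : c = b := by
    have hfix' := congrArg pap hfix
    rw [pap_ab, pap_ca] at hfix'
    simpa only [papSlope_pointOfSlopes h2 ha, papSlope_pointOfSlopes h2 hb] using
      congrArg papSlope hfix'
  exact ⟨hba.symm, hcb.symm⟩

theorem exists_isExactPeriodThree_iff_exists_isSlopeCycle (h2 : (2 : k) ≠ 0) :
    (∃ z : k × k, IsExactPeriodThree z) ↔
      ∃ a b c : k, IsSlopeCycle a b c ∧ ¬(a = b ∧ b = c) :=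
  ⟨fun ⟨_, hz⟩ => exists_isSlopeCycle_of_isExactPeriodThree h2 hz,
    fun ⟨_, _, _, h, hne⟩ => ⟨_, h.isExactPeriodThree h2 hne⟩⟩

end PapSlope

section GaussPeriod

variable {R K : Type*} [CommRing R] [Fintype R] [DecidableEq R] [CommRing K]

/-- The Gaussian period `∑ ψ (c a)` over the solutions of `a ^ m = 1` in `R`. For prime `p` and
`m ∣ p - 1` the solutions in `ZMod p` are the subgroup of units of order `m`. -/
def gaussPeriod (ψ : AddChar R K) (m : ℕ) (c : R) : K :=
  ∑ a : R with a ^ m = 1, ψ (c * a)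

theorem gaussPeriod_eq_of_pow_eq_pow (ψ : AddChar R K) {m : ℕ} {c d : R} (hc : IsUnit c)
    (hd : IsUnit d) (h : c ^ m = d ^ m) : gaussPeriod ψ m c = gaussPeriod ψ m d := by
  lift c to Rˣ using hc
  lift d to Rˣ using hd
  have hu : (d⁻¹ * c) ^ m = 1 := by
    rw [mul_pow, inv_pow, inv_mul_eq_one]
    exact_mod_cast h.symm
  refine Finset.sum_equiv (Units.mulLeft (d⁻¹ * c)) (fun a => ?_) fun a _ => ?_
  · rw [Finset.mem_filter_univ, Finset.mem_filter_univ, Units.mulLeft_apply, mul_pow,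
      ← Units.val_pow_eq_pow_val, hu, Units.val_one, one_mul]
  · rw [Units.mulLeft_apply, Units.val_mul, ← mul_assoc, Units.mul_inv_cancel_left]

variable {k : Type*} [Field k] [Fintype k] [Algebra k K]

theorem pow_card_eq_self_iff_mem_range_algebraMap [IsDomain K] {x : K} :
    x ^ Fintype.card k = x ↔ x ∈ Set.range (algebraMap k K) := by
  refine ⟨fun hx => ?_, ?_⟩
  · have hsplits : (X ^ Fintype.card k - X : k[X]).Splits := by
      simpa only [Nat.card_eq_fintype_card] using splits_X_pow_nat_card_sub_X (K := k)
    exact hsplits.mem_range_of_isRoot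
      (FiniteField.X_pow_card_sub_X_ne_zero k Fintype.one_lt_card) (by simp [hx])
  · rintro ⟨t, rfl⟩
    rw [← map_pow, FiniteField.pow_card]

variable (k) in
theorem gaussPeriod_pow_card (ψ : AddChar R K) (m : ℕ) (c : R) :
    gaussPeriod ψ m c ^ Fintype.card k = gaussPeriod ψ m (Fintype.card k * c) := by
  change FiniteField.frobeniusAlgHom k K (gaussPeriod ψ m c) = _
  simp only [gaussPeriod, map_sum, FiniteField.coe_frobeniusAlgHom, ← AddChar.map_nsmul_eq_pow,
    nsmul_eq_mul, mul_assoc]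

theorem gaussPeriod_mem_range_algebraMap_iff [IsDomain K] {ψ : AddChar R K} {m : ℕ}
    (hq : IsUnit (Fintype.card k : R))
    (hinj : ∀ c d : R, IsUnit c → IsUnit d → gaussPeriod ψ m c = gaussPeriod ψ m d → c ^ m = d ^ m)
    {c : R} (hc : IsUnit c) :
    gaussPeriod ψ m c ∈ Set.range (algebraMap k K) ↔ (Fintype.card k : R) ^ m = 1 := by
  have hqc : ((Fintype.card k : R) * c) ^ m = c ^ m ↔ (Fintype.card k : R) ^ m = 1 := by
    rw [mul_pow, (hc.pow m).mul_eq_right]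
  rw [← pow_card_eq_self_iff_mem_range_algebraMap, gaussPeriod_pow_card, ← hqc]
  exact ⟨hinj _ _ (hq.mul hc) hc, gaussPeriod_eq_of_pow_eq_pow ψ (hq.mul hc) hc⟩

theorem exists_isRoot_iff_card_pow_eq_one_of_map_eq_prod {L : Type*} [Field L] [Algebra k L]
    {ψ : AddChar R L} {m : ℕ} {S : Finset R} {P : k[X]}
    (hq : IsUnit (Fintype.card k : R)) (hSunit : ∀ s ∈ S, IsUnit s)
    (hS : ∀ c : R, IsUnit c → ∃ s ∈ S, c ^ m = s ^ m) (hsep : P.Separable)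
    (hP : P.map (algebraMap k L) = ∏ s ∈ S, (X - C (gaussPeriod ψ m s))) :
    (∃ t, P.IsRoot t) ↔ (Fintype.card k : R) ^ m = 1 := by
  have hinjS := separable_prod_X_sub_C_iff'.1 (hP ▸ hsep.map)
  have hinj (c d : R) (hc : IsUnit c) (hd : IsUnit d)
      (hcd : gaussPeriod ψ m c = gaussPeriod ψ m d) : c ^ m = d ^ m := by
    obtain ⟨s, hs, hcs⟩ := hS c hc
    obtain ⟨t, ht, hdt⟩ := hS d hd
    rw [gaussPeriod_eq_of_pow_eq_pow ψ hc (hSunit s hs) hcs,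
      gaussPeriod_eq_of_pow_eq_pow ψ hd (hSunit t ht) hdt] at hcd
    rw [hcs, hdt, hinjS s hs t ht hcd]
  have isRoot_iff (t : k) : P.IsRoot t ↔ ∃ s ∈ S, gaussPeriod ψ m s = algebraMap k L t := by
    rw [← isRoot_map_iff (algebraMap k L).injective, hP, IsRoot, eval_prod,
      Finset.prod_eq_zero_iff]
    simp only [eval_sub, eval_X, eval_C, sub_eq_zero, eq_comm (a := algebraMap k L t)]
  constructor
  · rintro ⟨t, ht⟩
    obtain ⟨s, hs, hst⟩ := (isRoot_iff t).1 ht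
    exact (gaussPeriod_mem_range_algebraMap_iff hq hinj (hSunit s hs)).1 ⟨t, hst.symm⟩
  · intro hqm
    obtain ⟨s, hs, -⟩ := hS 1 isUnit_one
    obtain ⟨t, ht⟩ := (gaussPeriod_mem_range_algebraMap_iff hq hinj (hSunit s hs)).2 hqm
    exact ⟨t, (isRoot_iff t).2 ⟨s, hs, ht.symm⟩⟩

end GaussPeriod

section CyclotomicCubics

theorem isUnit_natCast_card_iff {k : Type*} [Field k] [Fintype k] (l : ℕ) :
    IsUnit (Fintype.card k : ZMod l) ↔ (l : k) ≠ 0 := by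
  obtain ⟨p, _⟩ := CharP.exists k
  obtain ⟨n, hp, hcard⟩ := FiniteField.card k p
  rw [ZMod.isUnit_iff_coprime, hcard, Nat.coprime_pow_left_iff n.pos, hp.coprime_iff_not_dvd, Ne,
    CharP.cast_eq_zero_iff k p]

variable {R : Type*} [CommRing R]

theorem separable_of_mul_add_mul_derivative_eq_C {P u v : R[X]} {d : R} (hd : IsUnit d)
    (h : u * P + v * derivative P = C d) : P.Separable := by
  obtain ⟨e, hed⟩ := hd.exists_left_inv
  exact ⟨C e * u, C e * v, by rw [mul_assoc, mul_assoc, ← mul_add, h, ← C_mul, hed, C_1]⟩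

theorem separable_cubic_thirteen (h13 : IsUnit (13 : R)) :
    (X ^ 3 + X ^ 2 - 4 * X + 1 : R[X]).Separable := by
  refine separable_of_mul_add_mul_derivative_eq_C (u := -6 * X - 7)
    (v := 2 * X ^ 2 + 3 * X - 5) h13 ?_
  simp only [derivative_add, derivative_sub, derivative_mul, derivative_X_pow, derivative_X,
    derivative_ofNat, derivative_one, map_ofNat, Nat.cast_ofNat]
  ring

theorem separable_cubic_seven (h7 : IsUnit (7 : R)) :
    (X ^ 3 + X ^ 2 - 2 * X - 1 : R[X]).Separable := by
  refine separable_of_mul_add_mul_derivative_eq_C (u := -6 * X - 1)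
    (v := 2 * X ^ 2 + X - 3) h7 ?_
  simp only [derivative_add, derivative_sub, derivative_mul, derivative_X_pow, derivative_X,
    derivative_ofNat, derivative_one, map_ofNat, Nat.cast_ofNat]
  ring

theorem X_sub_C_mul_X_sub_C_mul_X_sub_C (a b c : R) :
    (X - C a) * ((X - C b) * (X - C c)) =
      X ^ 3 - C (a + b + c) * X ^ 2 + C (a * b + b * c + c * a) * X - C (a * b * c) := by
  simp only [C_add, C_mul]
  ring

theorem gaussPeriod_zmodChar_thirteen {ζ : R} (hζ : ζ ^ 13 = 1) (s : ZMod 13) :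
    gaussPeriod (AddChar.zmodChar 13 hζ) 4 s =
      ζ ^ (s * 1).val + (ζ ^ (s * 5).val + (ζ ^ (s * 8).val + ζ ^ (s * 12).val)) := by
  have hsol : ({a : ZMod 13 | a ^ 4 = 1} : Finset (ZMod 13)) = {1, 5, 8, 12} := by decide
  simp only [gaussPeriod, hsol, AddChar.zmodChar_apply]
  rw [Finset.sum_insert (by decide), Finset.sum_insert (by decide),
    Finset.sum_insert (by decide), Finset.sum_singleton]

theorem prod_X_sub_C_gaussPeriod_thirteen [IsDomain R] {ζ : R} (hζ : IsPrimitiveRoot ζ 13) :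
    ∏ s ∈ ({1, 2, 4} : Finset (ZMod 13)),
      (X - C (gaussPeriod (AddChar.zmodChar 13 hζ.pow_eq_one) 4 s)) =
        X ^ 3 + X ^ 2 - 4 * X + 1 := by
  have hpow : ζ ^ 13 = 1 := hζ.pow_eq_one
  have hsum : ∑ i ∈ Finset.range 13, ζ ^ i = 0 := hζ.geom_sum_eq_zero (by norm_num)
  simp only [Finset.sum_range_succ, Finset.sum_range_zero] at hsum
  rw [Finset.prod_insert (by decide), Finset.prod_insert (by decide), Finset.prod_singleton,
    X_sub_C_mul_X_sub_C_mul_X_sub_C]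
  set a := gaussPeriod (AddChar.zmodChar 13 hζ.pow_eq_one) 4 1
  set b := gaussPeriod (AddChar.zmodChar 13 hζ.pow_eq_one) 4 2
  set c := gaussPeriod (AddChar.zmodChar 13 hζ.pow_eq_one) 4 4
  have ha : a = ζ ^ 1 + (ζ ^ 5 + (ζ ^ 8 + ζ ^ 12)) :=
    gaussPeriod_zmodChar_thirteen hpow 1
  have hb : b = ζ ^ 2 + (ζ ^ 10 + (ζ ^ 3 + ζ ^ 11)) :=
    gaussPeriod_zmodChar_thirteen hpow 2
  have hc : c = ζ ^ 4 + (ζ ^ 7 + (ζ ^ 6 + ζ ^ 9)) :=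
    gaussPeriod_zmodChar_thirteen hpow 4
  have hadd : a + b + c = -1 := by
    rw [ha, hb, hc]
    linear_combination hsum
  -- In each product the coefficient of `hpow` collects the monomials of degree at least `13`.
  have hab : a * b = b - 1 := by
    rw [ha, hb]
    linear_combination
      (ζ + 2 * ζ ^ 2 + ζ ^ 3 + ζ ^ 5 + ζ ^ 6 + ζ ^ 9 + ζ ^ 10) * hpow + hsum
  have hbc : b * c = c - 1 := by
    rw [hb, hc]
    linear_combination
      (ζ + ζ ^ 2 + ζ ^ 3 + 2 * ζ ^ 4 + ζ ^ 5 + ζ ^ 6 + ζ ^ 7) * hpow + hsum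
  have hca : c * a = a - 1 := by
    rw [hc, ha]
    linear_combination
      (2 * ζ + ζ ^ 2 + ζ ^ 3 + ζ ^ 4 + ζ ^ 5 + ζ ^ 6 + ζ ^ 8) * hpow + hsum
  have hmul : a * b + b * c + c * a = -4 := by linear_combination hab + hbc + hca + hadd
  have habc : a * b * c = -1 := by linear_combination c * hab + hbc
  rw [hadd, hmul, habc]
  simp only [C_neg, C_1, C_ofNat]
  ring

theorem gaussPeriod_zmodChar_seven {ζ : R} (hζ : ζ ^ 7 = 1) (s : ZMod 7) :
    gaussPeriod (AddChar.zmodChar 7 hζ) 2 s = ζ ^ (s * 1).val + ζ ^ (s * 6).val := by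
  have hsol : ({a : ZMod 7 | a ^ 2 = 1} : Finset (ZMod 7)) = {1, 6} := by decide
  simp only [gaussPeriod, hsol, AddChar.zmodChar_apply]
  rw [Finset.sum_insert (by decide), Finset.sum_singleton]

theorem prod_X_sub_C_gaussPeriod_seven [IsDomain R] {ζ : R} (hζ : IsPrimitiveRoot ζ 7) :
    ∏ s ∈ ({1, 2, 3} : Finset (ZMod 7)),
      (X - C (gaussPeriod (AddChar.zmodChar 7 hζ.pow_eq_one) 2 s)) =
        X ^ 3 + X ^ 2 - 2 * X - 1 := by
  have hpow : ζ ^ 7 = 1 := hζ.pow_eq_one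
  have hsum : ∑ i ∈ Finset.range 7, ζ ^ i = 0 := hζ.geom_sum_eq_zero (by norm_num)
  simp only [Finset.sum_range_succ, Finset.sum_range_zero] at hsum
  rw [Finset.prod_insert (by decide), Finset.prod_insert (by decide), Finset.prod_singleton,
    X_sub_C_mul_X_sub_C_mul_X_sub_C]
  set a := gaussPeriod (AddChar.zmodChar 7 hζ.pow_eq_one) 2 1
  set b := gaussPeriod (AddChar.zmodChar 7 hζ.pow_eq_one) 2 2
  set c := gaussPeriod (AddChar.zmodChar 7 hζ.pow_eq_one) 2 3
  have ha : a = ζ ^ 1 + ζ ^ 6 := gaussPeriod_zmodChar_seven hpow 1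
  have hb : b = ζ ^ 2 + ζ ^ 5 := gaussPeriod_zmodChar_seven hpow 2
  have hc : c = ζ ^ 3 + ζ ^ 4 := gaussPeriod_zmodChar_seven hpow 3
  have hadd : a + b + c = -1 := by
    rw [ha, hb, hc]
    linear_combination hsum
  have hab : a * b = -1 - b := by
    rw [ha, hb]
    linear_combination (ζ + ζ ^ 4) * hpow + hsum
  have hbc : b * c = -1 - c := by
    rw [hb, hc]
    linear_combination (ζ + ζ ^ 2) * hpow + hsum
  have hca : c * a = -1 - a := by
    rw [hc, ha]
    linear_combination (ζ ^ 2 + ζ ^ 3) * hpow + hsum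
  have hmul : a * b + b * c + c * a = -2 := by linear_combination hab + hbc + hca - hadd
  have habc : a * b * c = 1 := by linear_combination c * hab - hbc
  rw [hadd, hmul, habc]
  simp only [C_neg, C_1, C_ofNat]
  ring

variable {k : Type*} [Field k] [Fintype k]

theorem exists_cubic_thirteen_iff_card_pow_four_eq_one :
    ((13 : k) ≠ 0 ∧ ∃ t : k, t ^ 3 + t ^ 2 - 4 * t + 1 = 0) ↔
      (Fintype.card k : ZMod 13) ^ 4 = 1 := by
  have isUnit_iff : IsUnit (Fintype.card k : ZMod 13) ↔ (13 : k) ≠ 0 :=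
    mod_cast isUnit_natCast_card_iff 13
  by_cases h13 : (13 : k) = 0
  · exact iff_of_false (fun h => h.1 h13)
      fun h => isUnit_iff.1 (IsUnit.of_pow_eq_one h four_ne_zero) h13
  have : NeZero ((13 : ℕ) : k) := ⟨mod_cast h13⟩
  have hζ := IsCyclotomicExtension.zeta_spec 13 k (CyclotomicField 13 k)
  have hmap : (X ^ 3 + X ^ 2 - 4 * X + 1 : k[X]).map (algebraMap k (CyclotomicField 13 k)) =
      ∏ s ∈ {1, 2, 4}, (X - C (gaussPeriod (AddChar.zmodChar 13 hζ.pow_eq_one) 4 s)) := by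
    rw [prod_X_sub_C_gaussPeriod_thirteen hζ]
    simp
  have hroot := exists_isRoot_iff_card_pow_eq_one_of_map_eq_prod (isUnit_iff.2 h13)
    (by decide) (by decide) (separable_cubic_thirteen (Ne.isUnit h13)) hmap
  simpa [h13, IsRoot] using hroot

theorem exists_cubic_seven_iff_card_sq_eq_one :
    ((7 : k) ≠ 0 ∧ ∃ t : k, t ^ 3 + t ^ 2 - 2 * t - 1 = 0) ↔
      (Fintype.card k : ZMod 7) ^ 2 = 1 := by
  have isUnit_iff : IsUnit (Fintype.card k : ZMod 7) ↔ (7 : k) ≠ 0 :=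
    mod_cast isUnit_natCast_card_iff 7
  by_cases h7 : (7 : k) = 0
  · exact iff_of_false (fun h => h.1 h7)
      fun h => isUnit_iff.1 (IsUnit.of_pow_eq_one h two_ne_zero) h7
  have : NeZero ((7 : ℕ) : k) := ⟨mod_cast h7⟩
  have hζ := IsCyclotomicExtension.zeta_spec 7 k (CyclotomicField 7 k)
  have hmap : (X ^ 3 + X ^ 2 - 2 * X - 1 : k[X]).map (algebraMap k (CyclotomicField 7 k)) =
      ∏ s ∈ {1, 2, 3}, (X - C (gaussPeriod (AddChar.zmodChar 7 hζ.pow_eq_one) 2 s)) := by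
    rw [prod_X_sub_C_gaussPeriod_seven hζ]
    simp
  have hroot := exists_isRoot_iff_card_pow_eq_one_of_map_eq_prod (isUnit_iff.2 h7)
    (by decide) (by decide) (separable_cubic_seven (Ne.isUnit h7)) hmap
  simpa [h7, IsRoot] using hroot

end CyclotomicCubics

theorem natCast_zmod_thirteen_pow_four_eq_one_iff (n : ℕ) :
    (n : ZMod 13) ^ 4 = 1 ↔ n % 13 = 1 ∨ n % 13 = 5 ∨ n % 13 = 8 ∨ n % 13 = 12 := by
  rw [← ZMod.val_natCast]
  generalize (n : ZMod 13) = a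
  decide +revert

theorem natCast_zmod_seven_sq_eq_one_iff (n : ℕ) :
    (n : ZMod 7) ^ 2 = 1 ↔ n % 7 = 1 ∨ n % 7 = 6 := by
  rw [← ZMod.val_natCast]
  generalize (n : ZMod 7) = a
  decide +revert

theorem pap_period_three_mod_condition_general {k : Type*} [Field k] [Fintype k]
    (h2 : (2 : k) ≠ 0) :
    (∃ z : k × k, IsExactPeriodThree z) ↔
      (Fintype.card k % 13 = 1 ∨ Fintype.card k % 13 = 5 ∨ Fintype.card k % 13 = 8 ∨
        Fintype.card k % 13 = 12 ∨ Fintype.card k % 7 = 1 ∨ Fintype.card k % 7 = 6) := by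
  rw [exists_isExactPeriodThree_iff_exists_isSlopeCycle h2, exists_isSlopeCycle_iff_exists_cubic,
    exists_cubic_thirteen_iff_card_pow_four_eq_one, exists_cubic_seven_iff_card_sq_eq_one,
    natCast_zmod_thirteen_pow_four_eq_one_iff, natCast_zmod_seven_sq_eq_one_iff]
  simp only [or_assoc]

/-- For all sufficiently large primes `p`, the Pappus–Steiner map has a point of period
exactly `3` over `𝔽_p` if and only if `p ≡ 1, 5, 8, 12 (mod 13)` or `p ≡ 1, 6 (mod 7)`. -/
theorem pap_period_three_mod_condition :
    ∃ N : ℕ, ∀ p : ℕ, N ≤ p → (hp : p.Prime) →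
      haveI : Fact p.Prime := ⟨hp⟩
      ((∃ x y : ZMod p,
          x ≠ y ∧
          (pap (x, y)).1 ≠ (pap (x, y)).2 ∧
          (pap (pap (x, y))).1 ≠ (pap (pap (x, y))).2 ∧
          pap (pap (pap (x, y))) = (x, y) ∧
          pap (x, y) ≠ (x, y)) ↔
        (p % 13 = 1 ∨ p % 13 = 5 ∨ p % 13 = 8 ∨ p % 13 = 12 ∨ p % 7 = 1 ∨ p % 7 = 6)) := by
  refine ⟨3, fun p h3 hp => ?_⟩
  have : Fact p.Prime := ⟨hp⟩
  have h2 : (2 : ZMod p) ≠ 0 := Ring.two_ne_zero (by rw [ZMod.ringChar_zmod_n]; lia)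
  simpa only [ZMod.card, Prod.exists, IsExactPeriodThree] using
    pap_period_three_mod_condition_general h2
end

section
/- Let π(x,y) = (2y(y−x+2)/(x−y)², y²/(x−y)²) for x ≠ y, considered over the finite field 𝔽_p = ZMod p for a prime p. There exists N such that for every prime p ≥ N the following are equivalent: (1) there exists (x,y) ∈ 𝔽_p² such that the points z₀ = (x,y), z₁ = π(z₀), z₂ = π(z₁), z₃ = π(z₂) each have distinct coordinates, π(z₃) = z₀, and z₂ ≠ z₀ (i.e., π has a point of period exactly 4 over 𝔽_p); (2) p mod 5 ∈ {1, 4}, or p mod 17 ∈ {1, 4, 13, 16}. -/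
/-!
The map `π` factors as `Φ ∘ Ψ` with `Ψ (x, y) = ((x - y) / y, (y - 2x + 4) / y)` and
`Φ (a, b) = ((1 + b) / a², 1 / a²)`, while `Ψ ∘ Φ` is the delayed quadratic map
`(a, b) ↦ (b, 4a² - 2b - 1)`. Points of period four of `π` therefore correspond to cycles
`a, b, c, d` of nonzero terms of the recurrence `tₙ₊₂ = 4tₙ² - 2tₙ₊₁ - 1`.

In the coordinates `A = 4(a + c) + 1`, `B = 4(b + d) + 1`, `x = 4(a - c)`, `y = 4(b - d)` such a
cycle is given by `Ax = 2y`, `By = -2x` and two quadratic equations, so `AB = -4` and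
`(A + B)(A + B - 1)(A + B - 3) = 0`. The outer factors lead to `√5`, hence to a condition modulo `5`
by quadratic reciprocity, and the middle one to a root of `x⁴ - 17x² + 68`. The roots of this
quartic are the differences `∑_{i ∈ H} zⁱ - ∑_{i ∈ 2H} zⁱ` of Gaussian periods, where `H` is the
group of fourth powers modulo `17` and `z` runs over the primitive `17`-th roots of unity. The
`q`-power Frobenius maps `z` to `z^q`, so such a difference lies in the field with `q` elements
exactly when `q` is in `H`.
-/

section Dynamics

variable {k : Type*} [Field k]

/-- `z` is a point of exact period four of the Pappus–Steiner map, all iterates being defined,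
that is, off the diagonal. -/
def IsPapPeriodFour (z : k × k) : Prop :=
  z.1 ≠ z.2 ∧
  (pap z).1 ≠ (pap z).2 ∧
  (pap (pap z)).1 ≠ (pap (pap z)).2 ∧
  (pap (pap (pap z))).1 ≠ (pap (pap (pap z))).2 ∧
  pap (pap (pap (pap z))) = z ∧
  pap (pap z) ≠ z

/-- The delayed quadratic map, which advances the pair `(tₙ, tₙ₊₁)` of consecutive terms of a
solution of the recurrence `tₙ₊₂ = 4tₙ² - 2tₙ₊₁ - 1`. -/
def delayMap (w : k × k) : k × k := (w.2, 4 * w.1 ^ 2 - 2 * w.2 - 1)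

/-- The factor `Ψ` of `pap = Φ ∘ Ψ`, from the plane of `pap` to that of `delayMap`. -/
def toDelay (z : k × k) : k × k := ((z.1 - z.2) / z.2, (z.2 - 2 * z.1 + 4) / z.2)

/-- The factor `Φ` of `pap = Φ ∘ Ψ`, from the plane of `delayMap` to that of `pap`. -/
def ofDelay (w : k × k) : k × k := ((1 + w.2) / w.1 ^ 2, 1 / w.1 ^ 2)

/-- `a, b, c, d` is a cycle of nonzero terms of the recurrence `tₙ₊₂ = 4tₙ² - 2tₙ₊₁ - 1` that does
not already repeat after two steps. -/
structure IsFourCycle (a b c d : k) : Prop where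
  ne_zero : a ≠ 0 ∧ b ≠ 0 ∧ c ≠ 0 ∧ d ≠ 0
  delayMap₁ : delayMap (a, b) = (b, c)
  delayMap₂ : delayMap (b, c) = (c, d)
  delayMap₃ : delayMap (c, d) = (d, a)
  delayMap₄ : delayMap (d, a) = (a, b)
  ne : (a, b) ≠ (c, d)

-- On the lines `x = y` and `y = 0` both sides are `0`, because division by zero gives `0`.
theorem ofDelay_toDelay (z : k × k) : ofDelay (toDelay z) = pap z := by
  obtain ⟨x, y⟩ := z
  rcases eq_or_ne y 0 with rfl | hy
  · simp [ofDelay, toDelay, pap]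
  · ext <;> simp only [ofDelay, toDelay, pap] <;> field_simp
    ring

theorem toDelay_ofDelay {w : k × k} (hw : w.1 ≠ 0) : toDelay (ofDelay w) = delayMap w := by
  ext <;> simp only [ofDelay, toDelay, delayMap] <;> field_simp <;> ring

theorem toDelay_pap {z : k × k} (hz : (toDelay z).1 ≠ 0) :
    toDelay (pap z) = delayMap (toDelay z) := by
  rw [← ofDelay_toDelay, toDelay_ofDelay hz]

theorem pap_ofDelay {w : k × k} (hw : w.1 ≠ 0) : pap (ofDelay w) = ofDelay (delayMap w) := by
  rw [← ofDelay_toDelay, toDelay_ofDelay hw]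

theorem toDelay_fst_ne_zero {z : k × k} (hz : z.1 ≠ z.2) (hpap : (pap z).1 ≠ (pap z).2) :
    (toDelay z).1 ≠ 0 := by
  refine div_ne_zero (sub_ne_zero.2 hz) fun hy => hpap ?_
  simp [pap, hy]

theorem ofDelay_fst_ne_snd {w : k × k} (h₁ : w.1 ≠ 0) (h₂ : w.2 ≠ 0) :
    (ofDelay w).1 ≠ (ofDelay w).2 := by
  have h : (ofDelay w).1 - (ofDelay w).2 = w.2 / w.1 ^ 2 := by
    simp only [ofDelay]
    ring
  rw [← sub_ne_zero, h]
  exact div_ne_zero h₂ (pow_ne_zero 2 h₁)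

theorem IsPapPeriodFour.exists_isFourCycle {z : k × k} (hz : IsPapPeriodFour z) :
    ∃ a b c d : k, IsFourCycle a b c d := by
  obtain ⟨off₀, off₁, off₂, off₃, period, not_period⟩ := hz
  have ne₀ := toDelay_fst_ne_zero off₀ off₁
  have ne₁ := toDelay_fst_ne_zero off₁ off₂
  have ne₂ := toDelay_fst_ne_zero off₂ off₃
  have ne₃ := toDelay_fst_ne_zero off₃ (by rwa [period])
  have step₀ := toDelay_pap ne₀
  have step₁ := toDelay_pap ne₁
  have step₂ := toDelay_pap ne₂
  have step₃ := toDelay_pap ne₃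
  rw [period] at step₃
  have overlap {w w' : k × k} (h : w' = delayMap w) : w = (w.1, w'.1) := by rw [h]; rfl
  have pair₀ := overlap step₀
  have pair₁ := overlap step₁
  have pair₂ := overlap step₂
  have pair₃ := overlap step₃
  refine ⟨_, _, _, _, ⟨ne₀, ne₁, ne₂, ne₃⟩, ?_, ?_, ?_, ?_, fun h => not_period ?_⟩
  · rw [← pair₀, ← pair₁, step₀]
  · rw [← pair₁, ← pair₂, step₁]
  · rw [← pair₂, ← pair₃, step₂]
  · rw [← pair₃, ← pair₀, step₃]
  · rw [← pair₀, ← pair₂] at h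
    have pap_eq : pap z = pap (pap (pap z)) := by
      simpa only [ofDelay_toDelay] using congrArg ofDelay h
    exact (congrArg pap pap_eq).trans period

theorem IsFourCycle.isPapPeriodFour {a b c d : k} (h : IsFourCycle a b c d) :
    IsPapPeriodFour (ofDelay (d, a)) := by
  obtain ⟨ha, hb, hc, hd⟩ := h.ne_zero
  have pap₁ : pap (ofDelay (d, a)) = ofDelay (a, b) := by rw [pap_ofDelay hd, h.delayMap₄]
  have pap₂ : pap (ofDelay (a, b)) = ofDelay (b, c) := by rw [pap_ofDelay ha, h.delayMap₁]
  have pap₃ : pap (ofDelay (b, c)) = ofDelay (c, d) := by rw [pap_ofDelay hb, h.delayMap₂]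
  have pap₄ : pap (ofDelay (c, d)) = ofDelay (d, a) := by rw [pap_ofDelay hc, h.delayMap₃]
  rw [IsPapPeriodFour, pap₁, pap₂, pap₃, pap₄]
  refine ⟨ofDelay_fst_ne_snd hd ha, ofDelay_fst_ne_snd ha hb, ofDelay_fst_ne_snd hb hc,
    ofDelay_fst_ne_snd hc hd, rfl, fun period_two => h.ne ?_⟩
  calc (a, b) = toDelay (ofDelay (d, a)) := by rw [toDelay_ofDelay hd, h.delayMap₄]
    _ = toDelay (ofDelay (b, c)) := by rw [period_two]
    _ = (c, d) := by rw [toDelay_ofDelay hb, h.delayMap₂]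

theorem exists_isPapPeriodFour_iff :
    (∃ x y : k, IsPapPeriodFour (x, y)) ↔ ∃ a b c d : k, IsFourCycle a b c d :=
  ⟨fun ⟨_, _, hz⟩ => hz.exists_isFourCycle, fun ⟨_, _, _, _, h⟩ => ⟨_, _, h.isPapPeriodFour⟩⟩

end Dynamics

section FourCycles

variable {k : Type*} [Field k]

/-- The equations of a four-cycle `a, b, c, d` in the coordinates `A = 4(a + c) + 1`,
`B = 4(b + d) + 1`, `x = 4(a - c)`, `y = 4(b - d)`. -/
structure IsSumDiffCycle (A B x y : k) : Prop where
  mul_left : A * x = 2 * y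
  mul_right : B * y = -2 * x
  sq_left : x ^ 2 = 4 * A + 4 * B + 9 - A ^ 2
  sq_right : y ^ 2 = 4 * A + 4 * B + 9 - B ^ 2

theorem IsFourCycle.isSumDiffCycle {a b c d : k} (h : IsFourCycle a b c d) :
    IsSumDiffCycle (4 * (a + c) + 1) (4 * (b + d) + 1) (4 * (a - c)) (4 * (b - d)) := by
  have h₁ := congrArg Prod.snd h.delayMap₁
  have h₂ := congrArg Prod.snd h.delayMap₂
  have h₃ := congrArg Prod.snd h.delayMap₃
  have h₄ := congrArg Prod.snd h.delayMap₄
  simp only [delayMap] at h₁ h₂ h₃ h₄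
  constructor
  · linear_combination 4 * h₁ - 4 * h₃
  · linear_combination 4 * h₂ - 4 * h₄
  · linear_combination 8 * h₁ + 8 * h₃
  · linear_combination 8 * h₂ + 8 * h₄

theorem IsSumDiffCycle.add_cubic_eq_zero {A B x y : k} (h : IsSumDiffCycle A B x y)
    (hAB : A * B = -4) (hA : A ≠ 0) : (A + B) * ((A + B - 1) * (A + B - 3)) = 0 := by
  have hsq : 4 * (4 * A + 4 * B + 9 - B ^ 2) = A ^ 2 * (4 * A + 4 * B + 9 - A ^ 2) := by
    rw [← h.sq_left, ← h.sq_right]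
    linear_combination -(A * x + 2 * y) * h.mul_left
  refine (mul_eq_zero.1 ?_).resolve_left hA
  linear_combination
    hsq + (3 * A ^ 2 + 3 * (A * B - 4) + B ^ 2 - 4 * A - 4 * B + 3) * hAB

theorem IsSumDiffCycle.mul_eq_neg_four {A B x y : k} (h : IsSumDiffCycle A B x y) (hx : x ≠ 0) :
    A * B = -4 :=
  mul_right_cancel₀ hx <| by linear_combination B * h.mul_left + 2 * h.mul_right

theorem isSumDiffCycle_of_sq_eq_five {r : k} (hr : r ^ 2 = 5) :
    IsSumDiffCycle 2 (-2) r r := by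
  constructor <;> grind

variable [NeZero (2 : k)]

theorem four_ne_zero_of_neZero_two : (4 : k) ≠ 0 := by
  rw [show (4 : k) = 2 ^ 2 by norm_num]
  exact pow_ne_zero 2 two_ne_zero

theorem eight_ne_zero_of_neZero_two : (8 : k) ≠ 0 := by
  rw [show (8 : k) = 2 ^ 3 by norm_num]
  exact pow_ne_zero 3 two_ne_zero

theorem isSumDiffCycle_of_quartic_eq_zero {x : k} (hx : x ^ 4 - 17 * x ^ 2 + 68 = 0) :
    IsSumDiffCycle (9 - x ^ 2) (x ^ 2 - 8) x ((9 - x ^ 2) * x / 2) := by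
  constructor <;> field_simp
  · linear_combination -x * hx
  · linear_combination hx
  · linear_combination (x ^ 2 + 3) * hx

theorem IsFourCycle.four_mul_sub_ne_zero {a b c d : k} (h : IsFourCycle a b c d) :
    4 * (a - c) ≠ 0 := by
  intro hac
  have hbd : 4 * (b - d) = 0 := by
    have double_eq : 2 * (4 * (b - d)) = 0 := by rw [← h.isSumDiffCycle.mul_left, hac, mul_zero]
    exact (mul_eq_zero.1 double_eq).resolve_left two_ne_zero
  refine h.ne (Prod.ext ?_ ?_)
  · exact sub_eq_zero.1 ((mul_eq_zero.1 hac).resolve_left four_ne_zero_of_neZero_two)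
  · exact sub_eq_zero.1 ((mul_eq_zero.1 hbd).resolve_left four_ne_zero_of_neZero_two)

theorem IsSumDiffCycle.isFourCycle {A B x y : k} (h : IsSumDiffCycle A B x y) (hx : x ≠ 0)
    (hac : (A - 1 + x) * (A - 1 - x) ≠ 0) (hbd : (B - 1 + y) * (B - 1 - y) ≠ 0) :
    IsFourCycle ((A - 1 + x) / 8) ((B - 1 + y) / 8) ((A - 1 - x) / 8) ((B - 1 - y) / 8) := by
  have h8 : (8 : k) ≠ 0 := eight_ne_zero_of_neZero_two
  obtain ⟨hAx, hBy, hx2, hy2⟩ := h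
  obtain ⟨ha, hc⟩ := mul_ne_zero_iff.1 hac
  obtain ⟨hb, hd⟩ := mul_ne_zero_iff.1 hbd
  refine ⟨⟨div_ne_zero ha h8, div_ne_zero hb h8, div_ne_zero hc h8, div_ne_zero hd h8⟩,
    ?_, ?_, ?_, ?_, fun hne => ?_⟩
  · refine Prod.ext rfl ?_
    simp only [delayMap]
    field_simp
    linear_combination 4 * hx2 + 8 * hAx
  · refine Prod.ext rfl ?_
    simp only [delayMap]
    field_simp
    linear_combination 4 * hy2 + 8 * hBy
  · refine Prod.ext rfl ?_
    simp only [delayMap]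
    field_simp
    linear_combination 4 * hx2 - 8 * hAx
  · refine Prod.ext rfl ?_
    simp only [delayMap]
    field_simp
    linear_combination 4 * hy2 - 8 * hBy
  · have hac_eq : A - 1 + x = A - 1 - x := (div_left_inj' h8).1 (congrArg Prod.fst hne)
    exact mul_ne_zero two_ne_zero hx (by linear_combination hac_eq)

theorem IsSumDiffCycle.exists_sq_eq_five_or_quartic {A B x y : k} (h : IsSumDiffCycle A B x y)
    (hx : x ≠ 0) :
    (∃ r : k, r ≠ 0 ∧ r ^ 2 = 5) ∨ ∃ t : k, t ≠ 0 ∧ t ^ 4 - 17 * t ^ 2 + 68 = 0 := by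
  have hAB := h.mul_eq_neg_four hx
  have hA : A ≠ 0 := by
    rintro rfl
    exact four_ne_zero_of_neZero_two (k := k) (by linear_combination hAB)
  have hx2 := h.sq_left
  rcases mul_eq_zero.1 (h.add_cubic_eq_zero hAB hA) with hsum | hsum
  · refine Or.inl ⟨x, hx, ?_⟩
    linear_combination hx2 + hAB + (4 - A) * hsum
  rcases mul_eq_zero.1 hsum with hsum | hsum
  · obtain rfl : B = 1 - A := by linear_combination hsum
    have hA_eq : A = 9 - x ^ 2 := by linear_combination hx2 + hAB
    refine Or.inr ⟨x, hx, ?_⟩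
    rw [hA_eq] at hAB
    linear_combination -hAB
  · obtain rfl : B = 3 - A := by linear_combination hsum
    have hA_roots : (A - 4) * (A + 1) = 0 := by linear_combination -hAB
    rcases mul_eq_zero.1 hA_roots with hA_eq | hA_eq
    · exact Or.inl ⟨x, hx, by linear_combination hx2 - (A + 4) * hA_eq⟩
    · refine Or.inl ⟨x / 2, div_ne_zero hx two_ne_zero, ?_⟩
      field_simp
      linear_combination hx2 - (A - 1) * hA_eq

theorem exists_isFourCycle_of_sq_eq_five {r : k} (hr0 : r ≠ 0) (hr : r ^ 2 = 5) :
    ∃ a b c d : k, IsFourCycle a b c d := by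
  refine ⟨_, _, _, _, (isSumDiffCycle_of_sq_eq_five hr).isFourCycle hr0 ?_ ?_⟩
  · have hac : (2 - 1 + r) * (2 - 1 - r) = -4 := by linear_combination -hr
    rw [hac]
    exact neg_ne_zero.2 four_ne_zero_of_neZero_two
  · have hbd : (-2 - 1 + r) * (-2 - 1 - r) = 4 := by linear_combination -hr
    rw [hbd]
    exact four_ne_zero_of_neZero_two

theorem exists_isFourCycle_of_quartic_eq_zero {x : k} (hx0 : x ≠ 0)
    (hx : x ^ 4 - 17 * x ^ 2 + 68 = 0) : ∃ a b c d : k, IsFourCycle a b c d := by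
  refine ⟨_, _, _, _, (isSumDiffCycle_of_quartic_eq_zero hx).isFourCycle hx0 ?_ ?_⟩
  · have hac : (9 - x ^ 2 - 1 + x) * (9 - x ^ 2 - 1 - x) = -4 := by linear_combination hx
    rw [hac]
    exact neg_ne_zero.2 four_ne_zero_of_neZero_two
  · have hbd : (x ^ 2 - 8 - 1 + (9 - x ^ 2) * x / 2) * (x ^ 2 - 8 - 1 - (9 - x ^ 2) * x / 2) =
        -4 := by
      field_simp
      linear_combination (5 - x ^ 2) * hx
    rw [hbd]
    exact neg_ne_zero.2 four_ne_zero_of_neZero_two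

theorem exists_isFourCycle_iff :
    (∃ a b c d : k, IsFourCycle a b c d) ↔
      (∃ r : k, r ≠ 0 ∧ r ^ 2 = 5) ∨ ∃ x : k, x ≠ 0 ∧ x ^ 4 - 17 * x ^ 2 + 68 = 0 := by
  constructor
  · rintro ⟨a, b, c, d, h⟩
    exact h.isSumDiffCycle.exists_sq_eq_five_or_quartic h.four_mul_sub_ne_zero
  · rintro (⟨r, hr0, hr⟩ | ⟨x, hx0, hx⟩)
    · exact exists_isFourCycle_of_sq_eq_five hr0 hr
    · exact exists_isFourCycle_of_quartic_eq_zero hx0 hx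

end FourCycles

section GaussianPeriods

/-- The difference `∑_{i ∈ H} zⁱ - ∑_{i ∈ 2H} zⁱ`, where `H = {1, 4, 13, 16}` is the group of fourth
powers modulo `17`. For a primitive `17`-th root of unity `z` it is a difference of two quartic
Gaussian periods. -/
def periodDiff {R : Type*} [CommRing R] (z : R) : R :=
  z + z ^ 4 + z ^ 13 + z ^ 16 - (z ^ 2 + z ^ 8 + z ^ 9 + z ^ 15)

/-- The sum of `zⁱ` over the squares `i` modulo `17`, a quadratic Gaussian period when `z` is a
primitive `17`-th root of unity. -/
def quadPeriod {R : Type*} [CommRing R] (z : R) : R :=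
  z + z ^ 2 + z ^ 4 + z ^ 8 + z ^ 9 + z ^ 13 + z ^ 15 + z ^ 16

theorem map_periodDiff {R S F : Type*} [CommRing R] [CommRing S] [FunLike F R S]
    [RingHomClass F R S] (φ : F) (z : R) : φ (periodDiff z) = periodDiff (φ z) := by
  simp only [periodDiff, map_sub, map_add, map_pow]

section CommRing

variable {R : Type*} [CommRing R] {z : R}

theorem periodDiff_pow_of_mem (hz : z ^ 17 = 1) {n : ℕ}
    (hn : n % 17 ∈ ({1, 4, 13, 16} : Finset ℕ)) : periodDiff (z ^ n) = periodDiff z := by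
  rw [pow_eq_pow_mod n hz]
  simp only [Finset.mem_insert, Finset.mem_singleton] at hn
  rcases hn with hn | hn | hn | hn <;> rw [hn] <;> simp only [periodDiff] <;> grind

theorem periodDiff_pow_eq_neg (hz : z ^ 17 = 1) {n : ℕ}
    (hn : n % 17 ∈ ({2, 8, 9, 15} : Finset ℕ)) : periodDiff (z ^ n) = -periodDiff z := by
  rw [pow_eq_pow_mod n hz]
  simp only [Finset.mem_insert, Finset.mem_singleton] at hn
  rcases hn with hn | hn | hn | hn <;> rw [hn] <;> simp only [periodDiff] <;> grind

theorem periodDiff_sq (hz : ∑ i ∈ Finset.range 17, z ^ i = 0) :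
    periodDiff z ^ 2 = 8 - quadPeriod z := by
  simp only [Finset.sum_range_succ, Finset.sum_range_zero] at hz
  simp only [periodDiff, quadPeriod]
  grind

theorem quadPeriod_sq_add (hz : ∑ i ∈ Finset.range 17, z ^ i = 0) :
    quadPeriod z ^ 2 + quadPeriod z = 4 := by
  simp only [Finset.sum_range_succ, Finset.sum_range_zero] at hz
  simp only [quadPeriod]
  grind

theorem quadPeriod_pow_add (hz : ∑ i ∈ Finset.range 17, z ^ i = 0) {n : ℕ}
    (hn : n % 17 ∈ ({3, 5, 6, 7, 10, 11, 12, 14} : Finset ℕ)) :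
    quadPeriod (z ^ n) + quadPeriod z = -1 := by
  have hz17 : z ^ 17 = 1 := by
    rw [← sub_eq_zero, ← geom_sum_mul, hz, zero_mul]
  rw [pow_eq_pow_mod n hz17]
  simp only [Finset.sum_range_succ, Finset.sum_range_zero] at hz
  simp only [Finset.mem_insert, Finset.mem_singleton] at hn
  rcases hn with hn | hn | hn | hn | hn | hn | hn | hn <;> rw [hn] <;>
    simp only [quadPeriod] <;> grind

end CommRing

section IsDomain

variable {R : Type*} [CommRing R] [IsDomain R] {z : R}

theorem seventeen_ne_zero_of_isPrimitiveRoot (hz : IsPrimitiveRoot z 17) : (17 : R) ≠ 0 := by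
  simpa using (hz.neZero' (n := 17)).out

theorem quartic_periodDiff_eq_zero (hz : IsPrimitiveRoot z 17) :
    periodDiff z ^ 4 - 17 * periodDiff z ^ 2 + 68 = 0 := by
  have hsum := hz.geom_sum_eq_zero (by norm_num)
  linear_combination (periodDiff z ^ 2 - 9 - quadPeriod z) * periodDiff_sq hsum +
    quadPeriod_sq_add hsum

theorem periodDiff_ne_zero [NeZero (2 : R)] (hz : IsPrimitiveRoot z 17) : periodDiff z ≠ 0 := by
  intro h
  have h68 : (2 : R) ^ 2 * 17 = 0 := by
    have hroot := quartic_periodDiff_eq_zero hz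
    rw [h] at hroot
    linear_combination hroot
  exact mul_ne_zero (pow_ne_zero 2 two_ne_zero) (seventeen_ne_zero_of_isPrimitiveRoot hz) h68

theorem periodDiff_sq_add_periodDiff_pow_sq (hz : IsPrimitiveRoot z 17) {n : ℕ}
    (hn : n % 17 ∈ ({3, 5, 6, 7, 10, 11, 12, 14} : Finset ℕ)) :
    periodDiff z ^ 2 + periodDiff (z ^ n) ^ 2 = 17 := by
  have hcop : n.Coprime 17 := by
    refine Nat.Coprime.symm ((Nat.Prime.coprime_iff_not_dvd (by norm_num)).2 fun hdvd => ?_)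
    rw [Nat.mod_eq_zero_of_dvd hdvd] at hn
    exact absurd hn (by decide)
  have hsum := hz.geom_sum_eq_zero (by norm_num)
  have hsum_pow := (hz.pow_of_coprime n hcop).geom_sum_eq_zero (by norm_num)
  linear_combination periodDiff_sq hsum + periodDiff_sq hsum_pow - quadPeriod_pow_add hsum hn

theorem periodDiff_pow_eq_iff [NeZero (2 : R)] (hz : IsPrimitiveRoot z 17) (n : ℕ) :
    periodDiff (z ^ n) = periodDiff z ↔ n % 17 ∈ ({1, 4, 13, 16} : Finset ℕ) := by
  refine ⟨fun h => ?_, periodDiff_pow_of_mem hz.pow_eq_one⟩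
  have residue_cases : ∀ r < 17, r ∈ ({1, 4, 13, 16} : Finset ℕ) ∨ r = 0 ∨
      r ∈ ({2, 8, 9, 15} : Finset ℕ) ∨ r ∈ ({3, 5, 6, 7, 10, 11, 12, 14} : Finset ℕ) := by decide
  rcases residue_cases _ (Nat.mod_lt n (by norm_num)) with hn | hn | hn | hn
  · exact hn
  · refine absurd h.symm ?_
    rw [pow_eq_pow_mod n hz.pow_eq_one, hn]
    simpa [periodDiff] using periodDiff_ne_zero hz
  · rw [periodDiff_pow_eq_neg hz.pow_eq_one hn] at h
    refine absurd ?_ (mul_ne_zero two_ne_zero (periodDiff_ne_zero hz))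
    linear_combination -h
  · have hsq := periodDiff_sq_add_periodDiff_pow_sq hz hn
    rw [h] at hsq
    refine absurd ?_ (seventeen_ne_zero_of_isPrimitiveRoot hz)
    have hroot := quartic_periodDiff_eq_zero hz
    linear_combination -4 * hroot + (2 * periodDiff z ^ 2 - 17) * hsq

theorem exists_periodDiff_eq (hz : IsPrimitiveRoot z 17) {x : R}
    (hx : x ^ 4 - 17 * x ^ 2 + 68 = 0) : ∃ w : R, IsPrimitiveRoot w 17 ∧ periodDiff w = x := by
  have eq_of_sq {w : R} (hw : IsPrimitiveRoot w 17) (h : x ^ 2 = periodDiff w ^ 2) :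
      ∃ w : R, IsPrimitiveRoot w 17 ∧ periodDiff w = x := by
    rcases sq_eq_sq_iff_eq_or_eq_neg.1 h with h | h
    · exact ⟨w, hw, h.symm⟩
    · refine ⟨w ^ 9, hw.pow_of_coprime 9 (by norm_num), ?_⟩
      rw [periodDiff_pow_eq_neg hw.pow_eq_one (by decide), h]
  have hsq := periodDiff_sq_add_periodDiff_pow_sq hz (n := 3) (by decide)
  have hfactor : (x ^ 2 - periodDiff z ^ 2) * (x ^ 2 - periodDiff (z ^ 3) ^ 2) = 0 := by
    linear_combination hx - quartic_periodDiff_eq_zero hz + (periodDiff z ^ 2 - x ^ 2) * hsq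
  rcases mul_eq_zero.1 hfactor with h | h
  · exact eq_of_sq hz (sub_eq_zero.1 h)
  · exact eq_of_sq (hz.pow_of_coprime 3 (by norm_num)) (sub_eq_zero.1 h)

end IsDomain

end GaussianPeriods

section FiniteFields

variable {k : Type*} [Field k] [Fintype k]

theorem natCast_eq_zero_iff_dvd_card {ℓ : ℕ} [Fact ℓ.Prime] :
    (ℓ : k) = 0 ↔ ℓ ∣ Fintype.card k := by
  rw [← prime_dvd_char_iff_dvd_card, ← not_iff_not, ← isUnit_iff_not_dvd_char, isUnit_iff_ne_zero]

open Polynomial in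
theorem mem_range_algebraMap_iff_pow_card {R : Type*} [CommRing R] [IsDomain R] [Algebra k R]
    {x : R} :
    x ∈ (algebraMap k R).range ↔ x ^ Fintype.card k = x := by
  constructor
  · rintro ⟨t, rfl⟩
    rw [← map_pow, FiniteField.pow_card]
  · intro hx
    have hsplits : (X ^ Fintype.card k - X : k[X]).Splits := by
      rw [splits_iff_card_roots, FiniteField.roots_X_pow_card_sub_X,
        FiniteField.X_pow_card_sub_X_natDegree_eq _ Fintype.one_lt_card]
      rfl
    have hroot : ((X ^ Fintype.card k - X : k[X]).map (algebraMap k R)).IsRoot x := by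
      simp [hx]
    exact hsplits.mem_range_of_isRoot
      (FiniteField.X_pow_card_sub_X_ne_zero k Fintype.one_lt_card) hroot

theorem periodDiff_pow_card {R : Type*} [CommRing R] [Algebra k R] (z : R) :
    periodDiff z ^ Fintype.card k = periodDiff (z ^ Fintype.card k) :=
  map_periodDiff (FiniteField.frobeniusAlgHom k R) z

theorem isSquare_five_iff (hk : ringChar k ≠ 2) :
    IsSquare (5 : k) ↔ IsSquare (Fintype.card k : ZMod 5) := by
  have neg_isSquare_iff : ∀ t : ZMod 5, IsSquare (-t) ↔ IsSquare t := by decide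
  have : Fact (Nat.Prime 5) := ⟨by norm_num⟩
  have reciprocity := FiniteField.isSquare_odd_prime_iff hk (p := 5) (by norm_num)
  rw [Ne, quadraticChar_neg_one_iff_not_isSquare, not_not, Nat.cast_ofNat] at reciprocity
  rw [reciprocity]
  have hodd := FiniteField.odd_card_of_char_ne_two hk
  rcases Nat.odd_mod_four_iff.1 hodd with h4 | h4
  · simp [ZMod.χ₄_nat_one_mod_four h4]
  · simp [ZMod.χ₄_nat_three_mod_four h4, neg_isSquare_iff]

theorem exists_ne_zero_sq_eq_five_iff (hk : ringChar k ≠ 2) :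
    (∃ r : k, r ≠ 0 ∧ r ^ 2 = 5) ↔ Fintype.card k % 5 ∈ ({1, 4} : Finset ℕ) := by
  have ne_zero_and_isSquare_iff :
      ∀ t : ZMod 5, t ≠ 0 ∧ IsSquare t ↔ t.val ∈ ({1, 4} : Finset ℕ) := by
    decide
  have : Fact (Nat.Prime 5) := ⟨by norm_num⟩
  have five_ne_zero : (5 : k) ≠ 0 ↔ (Fintype.card k : ZMod 5) ≠ 0 := by
    rw [Ne, Ne, ZMod.natCast_eq_zero_iff, ← natCast_eq_zero_iff_dvd_card (k := k), Nat.cast_ofNat]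
  rw [← ZMod.val_natCast, ← ne_zero_and_isSquare_iff, ← five_ne_zero, ← isSquare_five_iff hk]
  constructor
  · rintro ⟨r, hr0, hr⟩
    rw [← hr]
    exact ⟨pow_ne_zero 2 hr0, IsSquare.sq r⟩
  · rintro ⟨h5, r, hr⟩
    exact ⟨r, left_ne_zero_of_mul (hr ▸ h5), by rw [hr, sq]⟩

theorem exists_quartic_eq_zero_iff_of_isPrimitiveRoot [NeZero (2 : k)] {K : Type*} [Field K]
    [Algebra k K] {z : K} (hz : IsPrimitiveRoot z 17) :
    (∃ x : k, x ^ 4 - 17 * x ^ 2 + 68 = 0) ↔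
      Fintype.card k % 17 ∈ ({1, 4, 13, 16} : Finset ℕ) := by
  have : NeZero (2 : K) :=
    ⟨by rw [← map_ofNat (algebraMap k K) 2]; exact (map_ne_zero _).2 two_ne_zero⟩
  constructor
  · rintro ⟨x, hx⟩
    have hxK : algebraMap k K x ^ 4 - 17 * algebraMap k K x ^ 2 + 68 = 0 := by
      simpa only [map_add, map_sub, map_mul, map_pow, map_ofNat, map_zero]
        using congrArg (algebraMap k K) hx
    obtain ⟨w, hw, hwx⟩ := exists_periodDiff_eq hz hxK
    rw [← periodDiff_pow_eq_iff hw, ← periodDiff_pow_card,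
      ← mem_range_algebraMap_iff_pow_card, hwx]
    exact ⟨x, rfl⟩
  · intro hq
    rw [← periodDiff_pow_eq_iff hz, ← periodDiff_pow_card,
      ← mem_range_algebraMap_iff_pow_card] at hq
    obtain ⟨x, hx⟩ := hq
    refine ⟨x, (algebraMap k K).injective ?_⟩
    simpa only [map_add, map_sub, map_mul, map_pow, map_ofNat, map_zero, hx]
      using quartic_periodDiff_eq_zero hz

theorem exists_ne_zero_quartic_eq_zero_iff [NeZero (2 : k)] :
    (∃ x : k, x ≠ 0 ∧ x ^ 4 - 17 * x ^ 2 + 68 = 0) ↔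
      Fintype.card k % 17 ∈ ({1, 4, 13, 16} : Finset ℕ) := by
  have : Fact (Nat.Prime 17) := ⟨by norm_num⟩
  by_cases h17 : (17 : k) = 0
  · have hdvd : 17 ∣ Fintype.card k := natCast_eq_zero_iff_dvd_card.1 (by exact_mod_cast h17)
    refine iff_of_false ?_ (by rw [Nat.mod_eq_zero_of_dvd hdvd]; decide)
    rintro ⟨x, hx0, hx⟩
    exact pow_ne_zero 4 hx0 (by linear_combination hx + (x ^ 2 - 4) * h17)
  · have ne_zero {x : k} (hx : x ^ 4 - 17 * x ^ 2 + 68 = 0) : x ≠ 0 := by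
      rintro rfl
      exact mul_ne_zero (pow_ne_zero 2 two_ne_zero) h17 (by linear_combination hx)
    have : NeZero ((17 : ℕ) : AlgebraicClosure k) :=
      ⟨by rw [← map_natCast (algebraMap k _)]; exact (map_ne_zero _).2 h17⟩
    obtain ⟨z, hz⟩ := HasEnoughRootsOfUnity.exists_primitiveRoot (AlgebraicClosure k) 17
    rw [← exists_quartic_eq_zero_iff_of_isPrimitiveRoot hz]
    exact exists_congr fun x => and_iff_right_of_imp ne_zero

end FiniteFields

theorem pap_period_four_mod_condition_general {k : Type*} [Field k] [Fintype k]
    (hk : ringChar k ≠ 2) :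
    (∃ x y : k, IsPapPeriodFour (x, y)) ↔
      (Fintype.card k % 5 = 1 ∨ Fintype.card k % 5 = 4 ∨ Fintype.card k % 17 = 1 ∨
        Fintype.card k % 17 = 4 ∨ Fintype.card k % 17 = 13 ∨ Fintype.card k % 17 = 16) := by
  have : NeZero (2 : k) := ⟨Ring.two_ne_zero hk⟩
  rw [exists_isPapPeriodFour_iff, exists_isFourCycle_iff, exists_ne_zero_sq_eq_five_iff hk,
    exists_ne_zero_quartic_eq_zero_iff]
  simp only [Finset.mem_insert, Finset.mem_singleton, or_assoc]

/-- For all sufficiently large primes `p`, the Pappus–Steiner map has a point of period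
exactly `4` over `𝔽_p` if and only if `p ≡ 1, 4 (mod 5)` or `p ≡ 1, 4, 13, 16 (mod 17)`. -/
theorem pap_period_four_mod_condition :
    ∃ N : ℕ, ∀ p : ℕ, N ≤ p → (hp : p.Prime) →
      haveI : Fact p.Prime := ⟨hp⟩
      ((∃ x y : ZMod p,
          x ≠ y ∧
          (pap (x, y)).1 ≠ (pap (x, y)).2 ∧
          (pap (pap (x, y))).1 ≠ (pap (pap (x, y))).2 ∧
          (pap (pap (pap (x, y)))).1 ≠ (pap (pap (pap (x, y)))).2 ∧
          pap (pap (pap (pap (x, y)))) = (x, y) ∧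
          pap (pap (x, y)) ≠ (x, y)) ↔
        (p % 5 = 1 ∨ p % 5 = 4 ∨ p % 17 = 1 ∨ p % 17 = 4 ∨ p % 17 = 13 ∨ p % 17 = 16)) := by
  refine ⟨3, fun p hp3 hp => ?_⟩
  have : Fact p.Prime := ⟨hp⟩
  have hk : ringChar (ZMod p) ≠ 2 := by
    rw [ZMod.ringChar_zmod_n]
    omega
  simpa only [ZMod.card, IsPapPeriodFour] using pap_period_four_mod_condition_general hk
end
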